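/- Let N ≥ 2 and z = j_{N/2−1}, and define Q_k as the sequence Q_k = (z² / (2 N ω_N G_N²)) · (ℓ_k² − N²/4) / ( ℓ_k + N/2 − z J_{ℓ_k+1}(z)/J_{ℓ_k}(z) ) with ℓ_k = k + N/2 − 1. Then Q_2 < Q_3 if and only if (z² − 2) N² + 5 z² N − 2 z⁴ > 0. -/

import Mathlib

open MeasureTheory Metric Set Filter Topology
open scoped RealInnerProductSpace

noncomputable section

abbrev euc (N : ℕ) := EuclideanSpace ℝ (Fin N)

/-- Bessel function of the first kind of order `ν`, via its power series. -/
def besselJ (ν : ℝ) (x : ℝ) : ℝ :=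
  ∑' m : ℕ, ((-1 : ℝ) ^ m / (m.factorial * Real.Gamma (m + ν + 1))) *
    (x / 2) ^ (2 * (m : ℝ) + ν)

/-- First positive zero of the Bessel function `J_ν`. -/
def besselJzero (ν : ℝ) : ℝ := sInf {x : ℝ | 0 < x ∧ besselJ ν x = 0}

/-- Volume of the unit ball of `ℝ^N`. -/
def ballVol (N : ℕ) : ℝ := (volume (ball (0 : euc N) 1)).toReal

/-- Perimeter: `(N-1)`-dimensional Hausdorff measure of the topological boundary. -/
def perim (N : ℕ) (Ω : Set (euc N)) : ℝ := (μH[(N : ℝ) - 1] (frontier Ω)).toReal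

/-- First Dirichlet Laplacian eigenvalue: infimum of Rayleigh quotients over nonzero
smooth functions compactly supported in `Ω`. -/
def firstEigenvalue (N : ℕ) (Ω : Set (euc N)) : ℝ :=
  sInf { R : ℝ | ∃ u : euc N → ℝ, ContDiff ℝ (⊤ : ℕ∞) u ∧ HasCompactSupport u ∧
    tsupport u ⊆ Ω ∧ u ≠ 0 ∧
    R = (∫ x, ‖gradient u x‖ ^ 2) / (∫ x, u x ^ 2) }

/-- Radius of the ball `Ω♯` with the same Lebesgue measure as `Ω`. -/
def sharpRadius (N : ℕ) (Ω : Set (euc N)) : ℝ :=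
  ((volume Ω).toReal / ballVol N) ^ ((1 : ℝ) / N)

/-- Isoperimetric deficit `δP(Ω) = Per(Ω)/Per(Ω♯) - 1`. -/
def perDeficit (N : ℕ) (Ω : Set (euc N)) : ℝ :=
  perim N Ω / perim N (ball (0 : euc N) (sharpRadius N Ω)) - 1

/-- Faber-Krahn deficit `δλ(Ω) = λ(Ω)/λ(Ω♯) - 1`. -/
def fkDeficit (N : ℕ) (Ω : Set (euc N)) : ℝ :=
  firstEigenvalue N Ω / firstEigenvalue N (ball (0 : euc N) (sharpRadius N Ω)) - 1

/-- A one-parameter family `Ω t` of subsets of `ℝ^N` smoothly converges to `Ω₀` as `t → 0`. -/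
structure SmoothlyConverges (N : ℕ) (Ω : ℝ → Set (euc N)) (Ω₀ : Set (euc N)) where
  δ : ℝ
  δ_pos : 0 < δ
  Φ : ℝ → euc N → euc N
  Φinv : ℝ → euc N → euc N
  left_inv : ∀ t ∈ Ico (0 : ℝ) δ, Function.LeftInverse (Φinv t) (Φ t)
  right_inv : ∀ t ∈ Ico (0 : ℝ) δ, Function.RightInverse (Φinv t) (Φ t)
  smooth_x : ∀ t ∈ Ico (0 : ℝ) δ, ContDiff ℝ (⊤ : ℕ∞) (Φ t)
  smooth_x_inv : ∀ t ∈ Ico (0 : ℝ) δ, ContDiff ℝ (⊤ : ℕ∞) (Φinv t)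
  smooth_t : ∀ x, ContDiffOn ℝ (⊤ : ℕ∞) (fun t => Φ t x) (Ico (0 : ℝ) δ)
  smooth_t_inv : ∀ x, ContDiffOn ℝ (⊤ : ℕ∞) (fun t => Φinv t x) (Ico (0 : ℝ) δ)
  init : Ω 0 = Ω₀
  image : ∀ t ∈ Ico (0 : ℝ) δ, Ω t = Φ t '' Ω₀

/-- The Laplacian of `f : ℝ^N → ℝ`, as the trace of the second derivative. -/
def lap (N : ℕ) (f : euc N → ℝ) (x : euc N) : ℝ :=
  ∑ i : Fin N,
    iteratedFDeriv ℝ 2 f x ![EuclideanSpace.single i 1, EuclideanSpace.single i 1]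

/-- The divergence of a vector field on `ℝ^N`. -/
def diver (N : ℕ) (f : euc N → euc N) (x : euc N) : ℝ :=
  ∑ i : Fin N, ⟪fderiv ℝ f x (EuclideanSpace.single i 1), (EuclideanSpace.single i 1 : euc N)⟫

/-- The constant `G_N`: the modulus of the gradient on the boundary of the normalized first
eigenfunction of the unit ball. -/
def GN (N : ℕ) : ℝ :=
  (besselJzero ((N : ℝ) / 2 - 1)) ^ 2 *
      deriv (besselJ ((N : ℝ) / 2 - 1)) (besselJzero ((N : ℝ) / 2 - 1)) /
    Real.sqrt (N * ballVol N *
      ∫ r in (0 : ℝ)..(besselJzero ((N : ℝ) / 2 - 1)), r * besselJ ((N : ℝ) / 2 - 1) r ^ 2)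

/-- The optimal constant `C_N` of the paper. -/
def CN (N : ℕ) : ℝ :=
  (N * (N + 1) *
      ∫ r in (0 : ℝ)..(besselJzero ((N : ℝ) / 2 - 1)), r * besselJ ((N : ℝ) / 2 - 1) r ^ 2) /
    (2 * (besselJzero ((N : ℝ) / 2 - 1) *
        deriv (besselJ ((N : ℝ) / 2 - 1)) (besselJzero ((N : ℝ) / 2 - 1))) ^ 2 *
      ((besselJzero ((N : ℝ) / 2 - 1)) ^ 2 - N))

end

noncomputable section

/-- The sequence `Q_k` of Lemma 2.3:
`Q_k = (j²_{N/2-1}/(2Nω_N G_N²)) (ℓ_k² - N²/4)/(ℓ_k + N/2 - j_{N/2-1} J_{ℓ_k+1}(j)/J_{ℓ_k}(j))`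
with `ℓ_k = k + N/2 - 1`. -/
def Qseq (N : ℕ) (k : ℕ) : ℝ :=
  besselJzero ((N : ℝ) / 2 - 1) ^ 2 / (2 * N * ballVol N * GN N ^ 2) *
    ((((k : ℝ) + N / 2 - 1) ^ 2 - (N : ℝ) ^ 2 / 4) /
      (((k : ℝ) + N / 2 - 1) + N / 2 -
        besselJzero ((N : ℝ) / 2 - 1) *
            besselJ (((k : ℝ) + N / 2 - 1) + 1) (besselJzero ((N : ℝ) / 2 - 1)) /
          besselJ ((k : ℝ) + N / 2 - 1) (besselJzero ((N : ℝ) / 2 - 1))))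

end

/-!
Write `J_ν(x) = (x/2)^ν F_ν(x²/4)` with `F_ν` entire, `F_ν' = -F_{ν+1}` and
`F_ν + t F_{ν+2} = (ν + 1) F_{ν+1}`. Since `(t^{ν+1} F_{ν+1})' = t^ν F_ν`, positivity of `F_ν` on
`(0, t)` passes to `F_{ν+1}` on `(0, t]`; with the recurrence this yields the existence of the
first zero `z = j_ν` for `ν > -1`, the bounds `4 (ν + 1) < z² < 4 (ν + 1) (ν + 2)`, and
`J_{ν+n+1}(z) > 0`.

The ratios `r_μ = z J_{μ+1}(z) / J_μ(z)` satisfy `r_{μ+1} = 2 (μ + 1) - z² / r_μ`, and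
`J_ν(z) = 0` starts this continued fraction with `r_{ν+1} = 2 (ν + 1)`. For `ν = N/2 - 1` it gives,
up to a common positive factor, `Q_2 = N (N + 1) / (z² - N)` and
`Q_3 = 2 (N (N + 2) - z²) / (z² - 2 N)`; the bounds on `z²` make both denominators positive.
-/

section EntirePart

theorem inv_realGamma_eq_self_mul_inv_realGamma_add_one (s : ℝ) :
    (Real.Gamma s)⁻¹ = s * (Real.Gamma (s + 1))⁻¹ := by
  rcases eq_or_ne s 0 with rfl | hs
  · simp
  · rw [Real.Gamma_add_one hs, mul_inv, mul_inv_cancel_left₀ hs]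

/-- The Taylor coefficients of `besselEntire ν`. At the poles of `Γ` Mathlib's `Γ = 0` produces the
coefficient `0`, in agreement with the convention `1 / Γ = 0` there. -/
noncomputable def besselCoeff (ν : ℝ) (m : ℕ) : ℝ :=
  (-1 : ℝ) ^ m / (m.factorial * Real.Gamma (m + ν + 1))

theorem besselCoeff_succ_mul (ν : ℝ) (m : ℕ) :
    besselCoeff ν (m + 1) * (m + 1 : ℝ) = -besselCoeff (ν + 1) m := by
  have hm : (m : ℝ) + 1 ≠ 0 := by positivity
  have hΓ : (m : ℝ) + 1 + ν + 1 = m + (ν + 1) + 1 := by ring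
  simp only [besselCoeff, Nat.factorial_succ, Nat.cast_mul, Nat.cast_succ, hΓ, pow_succ,
    div_eq_mul_inv, mul_inv]
  field_simp

theorem besselCoeff_eq_mul_besselCoeff_add_one (ν : ℝ) (m : ℕ) :
    besselCoeff ν m = (m + ν + 1) * besselCoeff (ν + 1) m := by
  simp only [besselCoeff, div_eq_mul_inv, mul_inv, ← add_assoc]
  rw [inv_realGamma_eq_self_mul_inv_realGamma_add_one]
  ring

theorem summable_besselCoeff_mul_pow (ν t : ℝ) :
    Summable fun m : ℕ => besselCoeff ν m * t ^ m := by
  refine summable_of_ratio_norm_eventually_le (r := 1 / 2) (by norm_num) ?_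
  have hlarge : ∀ᶠ m : ℕ in atTop, 2 * |t| + |ν| ≤ m :=
    tendsto_natCast_atTop_atTop.eventually_ge_atTop _
  filter_upwards [hlarge] with m hm
  have hratio : besselCoeff ν m = -((m + ν + 1) * (m + 1)) * besselCoeff ν (m + 1) := by
    rw [besselCoeff_eq_mul_besselCoeff_add_one, ← neg_eq_iff_eq_neg.2 (besselCoeff_succ_mul ν m)]
    ring
  have hbound : 2 * |t| ≤ |(m + ν + 1) * (m + 1)| := by
    refine le_trans ?_ (le_abs_self _)
    nlinarith [neg_abs_le ν, abs_nonneg t, m.cast_nonneg (α := ℝ)]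
  rw [hratio, pow_succ]
  calc ‖besselCoeff ν (m + 1) * (t ^ m * t)‖
      = 1 / 2 * (2 * |t| * |besselCoeff ν (m + 1)| * |t ^ m|) := by
        simp only [Real.norm_eq_abs, abs_mul]
        ring
    _ ≤ 1 / 2 * (|(m + ν + 1) * (m + 1)| * |besselCoeff ν (m + 1)| * |t ^ m|) := by gcongr
    _ = 1 / 2 * ‖-((m + ν + 1) * (m + 1)) * besselCoeff ν (m + 1) * t ^ m‖ := by
        simp only [Real.norm_eq_abs, abs_mul, abs_neg]

/-- The entire function `F_ν` determined by `J_ν(x) = (x / 2) ^ ν * F_ν(x² / 4)`, i.e. the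
Bessel–Clifford function of order `ν` evaluated at `-t`. It isolates the analytic part of `J_ν` from
the power `(x / 2) ^ ν`. -/
noncomputable def besselEntire (ν t : ℝ) : ℝ := ∑' m : ℕ, besselCoeff ν m * t ^ m

theorem hasSum_besselEntire (ν t : ℝ) :
    HasSum (fun m : ℕ => besselCoeff ν m * t ^ m) (besselEntire ν t) :=
  (summable_besselCoeff_mul_pow ν t).hasSum

theorem hasSum_besselCoeff_mul_deriv_pow (ν t : ℝ) :
    HasSum (fun m : ℕ => besselCoeff ν m * (m * t ^ (m - 1))) (-besselEntire (ν + 1) t) := by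
  rw [← hasSum_nat_add_iff' 1]
  convert (hasSum_besselEntire (ν + 1) t).neg using 1
  · funext m
    rw [← neg_mul, ← besselCoeff_succ_mul, Nat.add_sub_cancel]
    push_cast
    ring
  · simp

theorem hasDerivAt_besselEntire (ν t : ℝ) :
    HasDerivAt (besselEntire ν) (-besselEntire (ν + 1) t) t := by
  rw [← (hasSum_besselCoeff_mul_deriv_pow ν t).tsum_eq]
  have hmem : t ∈ ball (0 : ℝ) (|t| + 1) := by simp
  refine hasDerivAt_tsum_of_isPreconnected
    (hasSum_besselCoeff_mul_deriv_pow ν (|t| + 1)).summable.norm isOpen_ball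
    (convex_ball _ _).isPreconnected (fun m y _ => (hasDerivAt_pow m y).const_mul _) ?_ hmem
    (summable_besselCoeff_mul_pow ν t) hmem
  intro m y hy
  have hy : |y| ≤ |t| + 1 := by simpa using (mem_ball_zero_iff.1 hy).le
  simp only [norm_mul, norm_pow, Real.norm_eq_abs, abs_of_nonneg (by positivity : 0 ≤ |t| + 1)]
  gcongr

theorem continuous_besselEntire (ν : ℝ) : Continuous (besselEntire ν) :=
  continuous_iff_continuousAt.2 fun t => (hasDerivAt_besselEntire ν t).continuousAt

theorem besselEntire_add_mul_besselEntire_add_two (ν t : ℝ) :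
    besselEntire ν t + t * besselEntire (ν + 2) t = (ν + 1) * besselEntire (ν + 1) t := by
  have hsum := ((hasSum_besselEntire (ν + 1) t).mul_left (ν + 1)).add
    ((hasSum_besselCoeff_mul_deriv_pow (ν + 1) t).mul_left t)
  have hterm (m : ℕ) : (ν + 1) * (besselCoeff (ν + 1) m * t ^ m) +
      t * (besselCoeff (ν + 1) m * (m * t ^ (m - 1))) = besselCoeff ν m * t ^ m := by
    rw [besselCoeff_eq_mul_besselCoeff_add_one ν]
    cases m with
    | zero => simp
    | succ m => rw [Nat.add_sub_cancel, pow_succ]; ring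
  simp only [hterm] at hsum
  rw [(hasSum_besselEntire ν t).unique hsum, show ν + 1 + 1 = ν + 2 by ring]
  ring

theorem besselEntire_zero (ν : ℝ) : besselEntire ν 0 = (Real.Gamma (ν + 1))⁻¹ := by
  rw [besselEntire, tsum_eq_single 0 fun m hm => by simp [hm]]
  simp [besselCoeff]

theorem besselEntire_zero_pos {ν : ℝ} (hν : -1 < ν) : 0 < besselEntire ν 0 := by
  rw [besselEntire_zero]
  exact inv_pos.2 (Real.Gamma_pos_of_pos (by linarith))

end EntirePart

section Positivity

variable {ν t : ℝ}

theorem besselEntire_pos_of_ne_zero (hν : -1 < ν) (ht : 0 ≤ t)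
    (hne : ∀ s ∈ Ioc 0 t, besselEntire ν s ≠ 0) : 0 < besselEntire ν t := by
  by_contra! hneg
  obtain ⟨s, hs, hs_zero⟩ := intermediate_value_Icc' ht (continuous_besselEntire ν).continuousOn
    ⟨hneg, (besselEntire_zero_pos hν).le⟩
  rcases hs.1.eq_or_lt with rfl | hs_pos
  · exact (besselEntire_zero_pos hν).ne' hs_zero
  · exact hne s ⟨hs_pos, hs.2⟩ hs_zero

theorem hasDerivAt_rpow_mul_besselEntire (ν : ℝ) (ht : 0 < t) :
    HasDerivAt (fun s => s ^ (ν + 1) * besselEntire (ν + 1) s) (t ^ ν * besselEntire ν t) t := by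
  refine ((Real.hasDerivAt_rpow_const (p := ν + 1) (Or.inl ht.ne')).mul
    (hasDerivAt_besselEntire (ν + 1) t)).congr_deriv ?_
  rw [add_sub_cancel_right, Real.rpow_add ht, Real.rpow_one, show ν + 1 + 1 = ν + 2 by ring]
  linear_combination -t ^ ν * besselEntire_add_mul_besselEntire_add_two ν t

theorem besselEntire_add_one_pos (hν : -1 < ν) (ht : 0 < t)
    (hpos : ∀ s ∈ Ioo 0 t, 0 < besselEntire ν s) : 0 < besselEntire (ν + 1) t := by
  have hmono : StrictMonoOn (fun s => s ^ (ν + 1) * besselEntire (ν + 1) s) (Icc 0 t) := by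
    refine strictMonoOn_of_deriv_pos (convex_Icc 0 t) ?_ fun s hs => ?_
    · exact ((Real.continuous_rpow_const (by linarith)).mul
        (continuous_besselEntire _)).continuousOn
    · rw [interior_Icc] at hs
      rw [(hasDerivAt_rpow_mul_besselEntire ν hs.1).deriv]
      exact mul_pos (Real.rpow_pos_of_pos hs.1 _) (hpos s hs)
  have hlt := hmono (left_mem_Icc.2 ht.le) (right_mem_Icc.2 ht.le) ht
  simp only [Real.zero_rpow (by linarith : ν + 1 ≠ 0), zero_mul] at hlt
  exact pos_of_mul_pos_right hlt (Real.rpow_nonneg ht.le _)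

theorem besselEntire_add_natCast_add_one_pos (hν : -1 < ν) (ht : 0 < t)
    (hpos : ∀ s ∈ Ioo 0 t, 0 < besselEntire ν s) (n : ℕ) :
    0 < besselEntire (ν + n + 1) t := by
  induction n generalizing t with
  | zero => simpa using besselEntire_add_one_pos hν ht hpos
  | succ n ih =>
    have hpos_n : ∀ s ∈ Ioo 0 t, 0 < besselEntire (ν + n + 1) s := fun s hs =>
      ih hs.1 fun r hr => hpos r ⟨hr.1, hr.2.trans hs.2⟩
    have hn : -1 < ν + n + 1 := by linarith [n.cast_nonneg (α := ℝ)]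
    simpa [add_assoc] using besselEntire_add_one_pos hn ht hpos_n

theorem besselEntire_lt_besselEntire_zero (ht : 0 < t)
    (hpos : ∀ s ∈ Ioo 0 t, 0 < besselEntire (ν + 1) s) : besselEntire ν t < besselEntire ν 0 := by
  have hanti : StrictAntiOn (besselEntire ν) (Icc 0 t) := by
    refine strictAntiOn_of_deriv_neg (convex_Icc 0 t) (continuous_besselEntire ν).continuousOn ?_
    intro s hs
    rw [interior_Icc] at hs
    rw [(hasDerivAt_besselEntire ν s).deriv]
    exact neg_lt_zero.2 (hpos s hs)
  exact hanti (left_mem_Icc.2 ht.le) (right_mem_Icc.2 ht.le) ht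

theorem lt_of_besselEntire_nonneg (hν : -1 < ν) (ht : 0 < t)
    (hpos : ∀ s ∈ Ioo 0 t, 0 < besselEntire ν s) (hnonneg : 0 ≤ besselEntire ν t) :
    t < (ν + 1) * (ν + 2) := by
  have hpos₁ : 0 < besselEntire (ν + 1) t := besselEntire_add_one_pos hν ht hpos
  have hpos₃ : 0 < besselEntire (ν + 1 + 2) t := by
    convert besselEntire_add_natCast_add_one_pos hν ht hpos 2 using 2
    push_cast
    ring
  have hrec₀ := besselEntire_add_mul_besselEntire_add_two ν t
  have hrec₁ := besselEntire_add_mul_besselEntire_add_two (ν + 1) t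
  rw [show ν + 1 + 1 = ν + 2 by ring] at hrec₁
  have hcomb : ((ν + 1) * (ν + 2) - t) * besselEntire (ν + 1) t =
      (ν + 2) * besselEntire ν t + t ^ 2 * besselEntire (ν + 1 + 2) t := by
    linear_combination -(ν + 2) * hrec₀ - t * hrec₁
  have hprod : 0 < ((ν + 1) * (ν + 2) - t) * besselEntire (ν + 1) t := by
    have hν₂ : 0 ≤ ν + 2 := by linarith
    rw [hcomb]
    positivity
  exact sub_pos.1 (pos_of_mul_pos_left hprod hpos₁.le)

theorem add_one_lt_of_besselEntire_eq_zero (hν : -1 < ν) (ht : 0 < t)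
    (hpos : ∀ s ∈ Ioo 0 t, 0 < besselEntire ν s) (hzero : besselEntire ν t = 0) : ν + 1 < t := by
  obtain ⟨c, hc, hslope⟩ := exists_hasDerivAt_eq_slope (besselEntire ν) _ ht
    (continuous_besselEntire ν).continuousOn fun s _ => hasDerivAt_besselEntire ν s
  have hc_lt : besselEntire (ν + 1) c < besselEntire (ν + 1) 0 := by
    refine besselEntire_lt_besselEntire_zero hc.1 fun s hs => ?_
    simpa using besselEntire_add_natCast_add_one_pos hν hs.1
      (fun r hr => hpos r ⟨hr.1, hr.2.trans (hs.2.trans hc.2)⟩) 1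
  rw [hzero, sub_zero, zero_sub, neg_div, neg_inj, eq_div_iff ht.ne'] at hslope
  have hrec := besselEntire_add_mul_besselEntire_add_two ν 0
  rw [zero_mul, add_zero] at hrec
  refine lt_of_mul_lt_mul_right ?_ (besselEntire_zero_pos (by linarith : -1 < ν + 1)).le
  calc (ν + 1) * besselEntire (ν + 1) 0 = besselEntire (ν + 1) c * t := by rw [← hrec, hslope]
    _ < besselEntire (ν + 1) 0 * t := mul_lt_mul_of_pos_right hc_lt ht
    _ = t * besselEntire (ν + 1) 0 := mul_comm _ _

theorem exists_pos_besselEntire_eq_zero (hν : -1 < ν) : ∃ t, 0 < t ∧ besselEntire ν t = 0 := by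
  by_contra! hne
  have hpos (t : ℝ) (ht : 0 < t) : 0 < besselEntire ν t :=
    besselEntire_pos_of_ne_zero hν ht.le fun s hs => hne s hs.1
  have hT : 0 < (ν + 1) * (ν + 2) := mul_pos (by linarith) (by linarith)
  exact (lt_of_besselEntire_nonneg hν hT (fun s hs => hpos s hs.1) (hpos _ hT).le).false

end Positivity

section BesselJ

variable {ν x : ℝ}

theorem besselJ_eq_rpow_mul_besselEntire (ν : ℝ) (hx : 0 < x) :
    besselJ ν x = (x / 2) ^ ν * besselEntire ν (x ^ 2 / 4) := by
  rw [besselJ, besselEntire, ← tsum_mul_left]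
  refine tsum_congr fun m => ?_
  have hpow : (x / 2) ^ (2 * (m : ℝ)) = (x ^ 2 / 4) ^ m := by
    rw [← Nat.cast_ofNat, ← Nat.cast_mul, Real.rpow_natCast, pow_mul]
    congr 1
    ring
  rw [Real.rpow_add (by positivity), hpow, besselCoeff]
  ring

theorem besselJ_eq_zero_iff (hx : 0 < x) : besselJ ν x = 0 ↔ besselEntire ν (x ^ 2 / 4) = 0 := by
  rw [besselJ_eq_rpow_mul_besselEntire ν hx, mul_eq_zero]
  exact or_iff_right (Real.rpow_pos_of_pos (half_pos hx) ν).ne'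

theorem besselJ_pos_iff (hx : 0 < x) : 0 < besselJ ν x ↔ 0 < besselEntire ν (x ^ 2 / 4) := by
  rw [besselJ_eq_rpow_mul_besselEntire ν hx]
  exact mul_pos_iff_of_pos_left (Real.rpow_pos_of_pos (half_pos hx) ν)

theorem mul_besselJ_add_besselJ_add_two (ν : ℝ) (hx : 0 < x) :
    x * (besselJ ν x + besselJ (ν + 2) x) = 2 * (ν + 1) * besselJ (ν + 1) x := by
  have hx₂ : 0 < x / 2 := half_pos hx
  simp only [besselJ_eq_rpow_mul_besselEntire _ hx, Real.rpow_add hx₂, Real.rpow_one,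
    Real.rpow_two]
  linear_combination x * (x / 2) ^ ν * besselEntire_add_mul_besselEntire_add_two ν (x ^ 2 / 4)

theorem hasDerivAt_besselJ (ν : ℝ) (hx : 0 < x) :
    HasDerivAt (besselJ ν) (ν / x * besselJ ν x - besselJ (ν + 1) x) x := by
  have hx₂ : 0 < x / 2 := half_pos hx
  have hrpow : HasDerivAt (fun y : ℝ => (y / 2) ^ ν) (1 / 2 * ν * (x / 2) ^ (ν - 1)) x :=
    ((hasDerivAt_id x).div_const 2).rpow_const (Or.inl hx₂.ne')
  have hsq : HasDerivAt (fun y : ℝ => y ^ 2 / 4) (x / 2) x := by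
    refine ((hasDerivAt_pow 2 x).div_const 4).congr_deriv ?_
    norm_num
    ring
  have hentire : HasDerivAt (fun y : ℝ => besselEntire ν (y ^ 2 / 4))
      (-besselEntire (ν + 1) (x ^ 2 / 4) * (x / 2)) x :=
    (hasDerivAt_besselEntire ν _).comp x hsq
  have heq : besselJ ν =ᶠ[𝓝 x] fun y => (y / 2) ^ ν * besselEntire ν (y ^ 2 / 4) := by
    filter_upwards [lt_mem_nhds hx] with y hy using besselJ_eq_rpow_mul_besselEntire ν hy
  refine ((hrpow.mul hentire).congr_of_eventuallyEq heq).congr_deriv ?_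
  rw [besselJ_eq_rpow_mul_besselEntire ν hx, besselJ_eq_rpow_mul_besselEntire (ν + 1) hx,
    Real.rpow_add hx₂, Real.rpow_sub hx₂, Real.rpow_one]
  field_simp
  ring

theorem intervalIntegrable_mul_besselJ_sq (hν : -1 < ν) (hx : 0 ≤ x) :
    IntervalIntegrable (fun r => r * besselJ ν r ^ 2) volume 0 x := by
  have hrpow : IntervalIntegrable (fun r : ℝ => r ^ (2 * ν + 1)) volume 0 x :=
    intervalIntegral.intervalIntegrable_rpow' (by linarith)
  have hcont : Continuous fun r : ℝ => (2 ^ ν)⁻¹ ^ 2 * besselEntire ν (r ^ 2 / 4) ^ 2 :=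
    continuous_const.mul (((continuous_besselEntire ν).comp (by fun_prop)).pow 2)
  refine (hrpow.mul_continuousOn hcont.continuousOn).congr fun r hr => ?_
  rw [uIoc_of_le hx] at hr
  have hr₀ : 0 < r := hr.1
  rw [besselJ_eq_rpow_mul_besselEntire ν hr₀, Real.div_rpow hr₀.le zero_le_two,
    Real.rpow_add hr₀, Real.rpow_one, mul_comm 2 ν, Real.rpow_mul hr₀.le, Real.rpow_two]
  ring

end BesselJ

section FirstZero

variable {ν : ℝ}

theorem isLeast_besselJzero (hν : -1 < ν) :
    IsLeast {x : ℝ | 0 < x ∧ besselJ ν x = 0} (besselJzero ν) := by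
  have hset : {x : ℝ | 0 < x ∧ besselJ ν x = 0} =
      {x : ℝ | 0 ≤ x ∧ besselEntire ν (x ^ 2 / 4) = 0} := by
    ext x
    constructor
    · exact fun ⟨hx, hJ⟩ => ⟨hx.le, (besselJ_eq_zero_iff hx).1 hJ⟩
    · rintro ⟨hx, hF⟩
      have hx_ne : x ≠ 0 := by
        rintro rfl
        exact (besselEntire_zero_pos hν).ne' (by simpa using hF)
      have hx_pos : 0 < x := hx.lt_of_ne' hx_ne
      exact ⟨hx_pos, (besselJ_eq_zero_iff hx_pos).2 hF⟩
  have hclosed : IsClosed {x : ℝ | 0 < x ∧ besselJ ν x = 0} := by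
    rw [hset]
    exact (isClosed_le continuous_const continuous_id).inter
      (isClosed_eq ((continuous_besselEntire ν).comp (by fun_prop)) continuous_const)
  obtain ⟨t, ht, ht_zero⟩ := exists_pos_besselEntire_eq_zero hν
  have hnonempty : {x : ℝ | 0 < x ∧ besselJ ν x = 0}.Nonempty := by
    refine ⟨2 * √t, by positivity, (besselJ_eq_zero_iff (by positivity)).2 ?_⟩
    rwa [mul_pow, Real.sq_sqrt ht.le, show 2 ^ 2 * t / 4 = t by ring]
  exact hclosed.isLeast_csInf hnonempty ⟨0, fun x hx => hx.1.le⟩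

theorem besselJzero_pos (hν : -1 < ν) : 0 < besselJzero ν := (isLeast_besselJzero hν).1.1

theorem besselJ_besselJzero (hν : -1 < ν) : besselJ ν (besselJzero ν) = 0 :=
  (isLeast_besselJzero hν).1.2

theorem besselEntire_pos_of_lt_besselJzero (hν : -1 < ν) {t : ℝ}
    (ht : t ∈ Ioo 0 (besselJzero ν ^ 2 / 4)) : 0 < besselEntire ν t := by
  refine besselEntire_pos_of_ne_zero hν ht.1.le fun s hs hs_zero => ?_
  have hsqrt : (2 * √s) ^ 2 / 4 = s := by
    rw [mul_pow, Real.sq_sqrt hs.1.le]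
    ring
  have hpos : 0 < 2 * √s := mul_pos two_pos (Real.sqrt_pos.2 hs.1)
  have hle : besselJzero ν ≤ 2 * √s := (isLeast_besselJzero hν).2
    ⟨hpos, (besselJ_eq_zero_iff hpos).2 (by rwa [hsqrt])⟩
  have hsq : besselJzero ν ^ 2 ≤ (2 * √s) ^ 2 := pow_le_pow_left₀ (besselJzero_pos hν).le hle 2
  linarith [ht.2, hs.2]

theorem besselJ_pos_of_lt_besselJzero (hν : -1 < ν) {x : ℝ} (hx : x ∈ Ioo 0 (besselJzero ν)) :
    0 < besselJ ν x := by
  have hx_pos : 0 < x := hx.1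
  have hsq : x ^ 2 < besselJzero ν ^ 2 := pow_lt_pow_left₀ hx.2 hx_pos.le two_ne_zero
  exact (besselJ_pos_iff hx_pos).2
    (besselEntire_pos_of_lt_besselJzero hν ⟨by positivity, by linarith⟩)

theorem besselJ_add_natCast_add_one_besselJzero_pos (hν : -1 < ν) (n : ℕ) :
    0 < besselJ (ν + n + 1) (besselJzero ν) := by
  have hz : 0 < besselJzero ν := besselJzero_pos hν
  exact (besselJ_pos_iff hz).2 (besselEntire_add_natCast_add_one_pos hν (by positivity)
    (fun _ => besselEntire_pos_of_lt_besselJzero hν) n)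

theorem four_mul_lt_besselJzero_sq (hν : -1 < ν) : 4 * (ν + 1) < besselJzero ν ^ 2 := by
  have hz : 0 < besselJzero ν := besselJzero_pos hν
  have hlt := add_one_lt_of_besselEntire_eq_zero hν (by positivity)
    (fun _ => besselEntire_pos_of_lt_besselJzero hν)
    ((besselJ_eq_zero_iff hz).1 (besselJ_besselJzero hν))
  linarith

theorem besselJzero_sq_lt (hν : -1 < ν) : besselJzero ν ^ 2 < 4 * ((ν + 1) * (ν + 2)) := by
  have hz : 0 < besselJzero ν := besselJzero_pos hν
  have hlt := lt_of_besselEntire_nonneg hν (by positivity)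
    (fun _ => besselEntire_pos_of_lt_besselJzero hν)
    ((besselJ_eq_zero_iff hz).1 (besselJ_besselJzero hν)).ge
  linarith

theorem deriv_besselJ_besselJzero_neg (hν : -1 < ν) : deriv (besselJ ν) (besselJzero ν) < 0 := by
  rw [(hasDerivAt_besselJ ν (besselJzero_pos hν)).deriv, besselJ_besselJzero hν, mul_zero, zero_sub,
    neg_lt_zero]
  simpa using besselJ_add_natCast_add_one_besselJzero_pos hν 0

theorem integral_mul_besselJ_sq_pos (hν : -1 < ν) :
    0 < ∫ r in (0 : ℝ)..besselJzero ν, r * besselJ ν r ^ 2 := by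
  have hz : 0 < besselJzero ν := besselJzero_pos hν
  exact intervalIntegral.intervalIntegral_pos_of_pos_on
    (intervalIntegrable_mul_besselJ_sq hν hz.le)
    (fun r hr => mul_pos hr.1 (pow_pos (besselJ_pos_of_lt_besselJzero hν hr) 2)) hz

end FirstZero

section Ratio

variable {ν x : ℝ}

/-- The ratio `x J_{ν+1}(x) / J_ν(x)` occurring in `Qseq`, with value `0` where `J_ν(x) = 0`. -/
noncomputable def besselRatio (ν x : ℝ) : ℝ := x * besselJ (ν + 1) x / besselJ ν x

-- If `J_ν(x) = 0`, then `x ^ 2 / besselRatio ν x` is `x ^ 2 / 0 = 0`, and the formula remains true.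
theorem besselRatio_add_one (hx : 0 < x) (hJ : besselJ (ν + 1) x ≠ 0) :
    besselRatio (ν + 1) x = 2 * (ν + 1) - x ^ 2 / besselRatio ν x := by
  have hrec := mul_besselJ_add_besselJ_add_two ν hx
  rw [besselRatio, besselRatio, div_div_eq_mul_div, show ν + 1 + 1 = ν + 2 by ring]
  field_simp
  linear_combination hrec

theorem besselRatio_add_one_besselJzero (hν : -1 < ν) :
    besselRatio (ν + 1) (besselJzero ν) = 2 * (ν + 1) := by
  have hJ : 0 < besselJ (ν + 1) (besselJzero ν) := by
    simpa using besselJ_add_natCast_add_one_besselJzero_pos hν 0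
  rw [besselRatio_add_one (besselJzero_pos hν) hJ.ne', besselRatio, besselJ_besselJzero hν]
  simp

theorem besselRatio_add_two_besselJzero (hν : -1 < ν) :
    besselRatio (ν + 2) (besselJzero ν) =
      2 * (ν + 2) - besselJzero ν ^ 2 / (2 * (ν + 1)) := by
  have hJ := besselJ_add_natCast_add_one_besselJzero_pos hν 1
  rw [Nat.cast_one] at hJ
  rw [show ν + 2 = ν + 1 + 1 by ring, besselRatio_add_one (besselJzero_pos hν) hJ.ne',
    besselRatio_add_one_besselJzero hν]

theorem besselRatio_add_three_besselJzero (hν : -1 < ν) :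
    besselRatio (ν + 3) (besselJzero ν) = 2 * (ν + 3) -
      besselJzero ν ^ 2 / (2 * (ν + 2) - besselJzero ν ^ 2 / (2 * (ν + 1))) := by
  have hJ := besselJ_add_natCast_add_one_besselJzero_pos hν 2
  rw [Nat.cast_ofNat] at hJ
  rw [show ν + 3 = ν + 2 + 1 by ring, besselRatio_add_one (besselJzero_pos hν) hJ.ne',
    besselRatio_add_two_besselJzero hν]

end Ratio

section ModeQuotient

variable {d : ℝ}

/-- The part of `Q_k` that depends on `k`, for a real dimension `d` in place of `N`. -/
noncomputable def modeQuotient (d k : ℝ) : ℝ :=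
  ((k + d / 2 - 1) ^ 2 - d ^ 2 / 4) /
    ((k + d / 2 - 1) + d / 2 - besselRatio (k + d / 2 - 1) (besselJzero (d / 2 - 1)))

theorem two_mul_lt_besselJzero_sq (hd : 0 < d) : 2 * d < besselJzero (d / 2 - 1) ^ 2 := by
  linarith [four_mul_lt_besselJzero_sq (by linarith : -1 < d / 2 - 1)]

theorem modeQuotient_two (hd : 0 < d) :
    modeQuotient d 2 = d * (d + 1) / (besselJzero (d / 2 - 1) ^ 2 - d) := by
  rw [modeQuotient, show 2 + d / 2 - 1 = d / 2 - 1 + 2 by ring,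
    besselRatio_add_two_besselJzero (by linarith)]
  generalize besselJzero (d / 2 - 1) ^ 2 = w
  have hden : d / 2 - 1 + 2 + d / 2 - (2 * (d / 2 - 1 + 2) - w / (2 * (d / 2 - 1 + 1))) =
      (w - d) / d := by
    rw [show 2 * (d / 2 - 1 + 1) = d by ring]
    field_simp
    ring
  rw [hden, div_div_eq_mul_div]
  ring

theorem modeQuotient_three (hd : 0 < d) :
    modeQuotient d 3 = 2 * (d * (d + 2) - besselJzero (d / 2 - 1) ^ 2) /
      (besselJzero (d / 2 - 1) ^ 2 - 2 * d) := by
  have hν : -1 < d / 2 - 1 := by linarith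
  have hpos : 0 < d * (d + 2) - besselJzero (d / 2 - 1) ^ 2 := by
    linarith [besselJzero_sq_lt hν]
  rw [modeQuotient, show 3 + d / 2 - 1 = d / 2 - 1 + 3 by ring,
    besselRatio_add_three_besselJzero hν]
  generalize besselJzero (d / 2 - 1) ^ 2 = w at hpos ⊢
  have hratio : 2 * (d / 2 - 1 + 2) - w / (2 * (d / 2 - 1 + 1)) = (d * (d + 2) - w) / d := by
    rw [show 2 * (d / 2 - 1 + 1) = d by ring]
    field_simp
    ring
  have hden : d / 2 - 1 + 3 + d / 2 - (2 * (d / 2 - 1 + 3) - w / ((d * (d + 2) - w) / d)) =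
      (d + 2) * (w - 2 * d) / (d * (d + 2) - w) := by
    have hne : d * (d + 2) - w ≠ 0 := hpos.ne'
    field_simp
    ring
  rw [hratio, hden, show (d / 2 - 1 + 3) ^ 2 - d ^ 2 / 4 = 2 * (d + 2) by ring]
  field_simp

theorem modeQuotient_two_lt_modeQuotient_three_iff (hd : 0 < d) :
    modeQuotient d 2 < modeQuotient d 3 ↔
      0 < (besselJzero (d / 2 - 1) ^ 2 - 2) * d ^ 2 + 5 * besselJzero (d / 2 - 1) ^ 2 * d -
        2 * besselJzero (d / 2 - 1) ^ 4 := by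
  have hlower := two_mul_lt_besselJzero_sq hd
  rw [modeQuotient_two hd, modeQuotient_three hd, div_lt_div_iff₀ (by linarith) (by linarith),
    ← sub_pos]
  ring_nf

end ModeQuotient

theorem ballVol_pos (N : ℕ) : 0 < ballVol N :=
  ENNReal.toReal_pos (measure_ball_pos _ _ one_pos).ne' measure_ball_lt_top.ne

theorem GN_neg {N : ℕ} (hN : 0 < N) : GN N < 0 := by
  have hN_pos : (0 : ℝ) < N := Nat.cast_pos.2 hN
  have hν : -1 < (N : ℝ) / 2 - 1 := by linarith
  exact div_neg_of_neg_of_pos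
    (mul_neg_of_pos_of_neg (pow_pos (besselJzero_pos hν) 2) (deriv_besselJ_besselJzero_neg hν))
    (Real.sqrt_pos.2 (mul_pos (mul_pos hN_pos (ballVol_pos N)) (integral_mul_besselJ_sq_pos hν)))

theorem Qseq_eq_mul_modeQuotient (N k : ℕ) :
    Qseq N k = besselJzero ((N : ℝ) / 2 - 1) ^ 2 / (2 * N * ballVol N * GN N ^ 2) *
      modeQuotient N k :=
  rfl

/-- **The key algebraic reduction of Lemma 2.3:** `Q_2 < Q_3` if and only if
`(z² - 2)N² + 5z²N - 2z⁴ > 0`, where `z = j_{N/2-1}`. -/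
theorem Q2_lt_Q3_iff (N : ℕ) (hN : 2 ≤ N) :
    Qseq N 2 < Qseq N 3 ↔
      0 < (besselJzero ((N : ℝ) / 2 - 1) ^ 2 - 2) * (N : ℝ) ^ 2 +
          5 * besselJzero ((N : ℝ) / 2 - 1) ^ 2 * N -
          2 * besselJzero ((N : ℝ) / 2 - 1) ^ 4 := by
  have hN_pos : 0 < N := by lia
  have hd : (0 : ℝ) < N := Nat.cast_pos.2 hN_pos
  have hz : 0 < besselJzero ((N : ℝ) / 2 - 1) := besselJzero_pos (by linarith)
  have hball : 0 < ballVol N := ballVol_pos N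
  have hG : 0 < GN N ^ 2 := sq_pos_of_neg (GN_neg hN_pos)
  have hfactor : 0 < besselJzero ((N : ℝ) / 2 - 1) ^ 2 / (2 * N * ballVol N * GN N ^ 2) := by
    positivity
  rw [Qseq_eq_mul_modeQuotient, Qseq_eq_mul_modeQuotient, mul_lt_mul_iff_right₀ hfactor]
  exact modeQuotient_two_lt_modeQuotient_three_iff hd
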